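/- Legendre-transform formula for the rate function: let θ ∈ (0,1/2] and let A : X → ℝ be a normalized Lipschitz potential. For a Borel probability ν on X define I(ν) := − inf{ ∫ ((𝓛_A u)(x) − u(x))/u(x) dν(x) : u ∈ C(X,ℝ), u(x) > 0 for all x }. Then for every Borel probability ν on X, I(ν) = sup{ ∫ V dν − λ : V : X → ℝ Lipschitz, λ ∈ ℝ, F ∈ C(X,ℝ) Lipschitz with F > 0 and 𝓛_A F = (1 − V + λ)·F pointwise }. -/

import Mathlib

/-!
If `F > 0` satisfies `𝓛_A F = (1 - V + λ) F`, then `V - λ = -(𝓛_A F - F) / F`, so every element of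
the set on the right is minus an element of the set defining `I(ν)`. Conversely, a positive
function `F` depending on finitely many coordinates is Lipschitz, and so is
`V = 1 - 𝓛_A F / F`; thus `(V, 0, F)` is admissible. It remains to see that the infimum over all
continuous `u > 0` is already approached along such `F`: the functions `u ∘ trunc n`
(`truncComp`), where `trunc n x` keeps the first `n` coordinates of `x` and replaces the others by
a fixed symbol, are positive and converge pointwise to `u`, and the integrands
`(𝓛_A u - u) / u` along them are uniformly bounded, so dominated convergence applies
(`tendsto_integral_trunc`). All the infima and suprema are finite because
`(𝓛_A u - u) / u ≥ -1`.
-/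

open MeasureTheory Filter

noncomputable section

/-- The concatenation `a·x`: `(ax)(0) = a`, `(ax)(n+1) = x n`. -/
def cons {d : ℕ} (a : Fin d) (x : ℕ → Fin d) : ℕ → Fin d
  | 0 => a
  | n + 1 => x n

/-- The shift map `σ` on the Bernoulli space. -/
def shift {d : ℕ} (x : ℕ → Fin d) : ℕ → Fin d := fun n => x (n + 1)

open Classical in
/-- The metric `d_θ` on the Bernoulli space: `d_θ(x,y) = θ^{min{n : x n ≠ y n}}` for `x ≠ y`. -/
def distTheta {d : ℕ} (θ : ℝ) (x y : ℕ → Fin d) : ℝ :=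
  if x = y then 0 else θ ^ sInf {n : ℕ | x n ≠ y n}

/-- The Ruelle operator with potential `B`, applied pointwise:
`(𝓛_B g)(x) = Σ_{a} e^{B(ax)} g(ax)`. -/
def ruelleSum {d : ℕ} (B : (ℕ → Fin d) → ℝ) (g : (ℕ → Fin d) → ℝ) (x : ℕ → Fin d) : ℝ :=
  ∑ a : Fin d, Real.exp (B (cons a x)) * g (cons a x)

/-- The exponential `e^B` of a bounded operator `B` on `C(X,ℝ)`, applied to `f`:
`e^B f = Σ_{n=0}^∞ (1/n!) Bⁿ f`. -/
def opExp {X : Type*} [TopologicalSpace X] [CompactSpace X]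
    (B : C(X, ℝ) →L[ℝ] C(X, ℝ)) (f : C(X, ℝ)) : C(X, ℝ) :=
  ∑' n : ℕ, ((Nat.factorial n : ℝ)⁻¹ • (B ^ n) f)

/-- The rate function `I(ν) = - inf { ∫ (𝓛_A u - u)/u dν : u ∈ C(X,ℝ), u > 0 }`. -/
def Ifun {d : ℕ} (A : (ℕ → Fin d) → ℝ) (ν : Measure (ℕ → Fin d)) : ℝ :=
  - sInf {r : ℝ | ∃ u : C((ℕ → Fin d), ℝ), (∀ x, 0 < u x) ∧
      r = ∫ x, (ruelleSum A u x - u x) / u x ∂ν}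

/-! ### The metric `d_θ` -/

theorem distTheta_nonneg {d : ℕ} {θ : ℝ} (h0 : 0 < θ) (x y : ℕ → Fin d) :
    0 ≤ distTheta θ x y := by
  unfold distTheta
  split_ifs <;> positivity

theorem distTheta_le_pow {d : ℕ} {θ : ℝ} (h0 : 0 < θ) (h1 : θ ≤ 1) {x y : ℕ → Fin d} {n : ℕ}
    (h : ∀ i < n, x i = y i) : distTheta θ x y ≤ θ ^ n := by
  unfold distTheta
  split_ifs with hxy
  · positivity
  · apply pow_le_pow_of_le_one h0.le h1
    obtain ⟨k, hk⟩ := Function.ne_iff.mp hxy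
    refine le_csInf ⟨k, hk⟩ fun m hm => ?_
    by_contra hlt
    exact hm (h m (not_le.mp hlt))

theorem pow_le_distTheta {d : ℕ} {θ : ℝ} (h0 : 0 < θ) (h1 : θ ≤ 1) {x y : ℕ → Fin d} {n i : ℕ}
    (hi : i < n) (h : x i ≠ y i) : θ ^ n ≤ distTheta θ x y := by
  unfold distTheta
  rw [if_neg fun hxy => h (congrFun hxy i)]
  have hle : sInf {k : ℕ | x k ≠ y k} ≤ i := Nat.sInf_le h
  exact pow_le_pow_of_le_one h0.le h1 (hle.trans hi.le)

theorem distTheta_cons_le {d : ℕ} {θ : ℝ} (h0 : 0 < θ) (h1 : θ ≤ 1) (a : Fin d)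
    (x y : ℕ → Fin d) : distTheta θ (cons a x) (cons a y) ≤ distTheta θ x y := by
  by_cases hxy : x = y
  · simp [distTheta, hxy]
  · have h : distTheta θ x y = θ ^ sInf {n : ℕ | x n ≠ y n} := if_neg hxy
    rw [h]
    refine (distTheta_le_pow h0 h1 (n := sInf {n : ℕ | x n ≠ y n} + 1) ?_).trans
      (pow_le_pow_of_le_one h0.le h1 (Nat.le_succ _))
    rintro (_ | i) hi
    · rfl
    · by_contra hne
      exact absurd (Nat.sInf_le (s := {n : ℕ | x n ≠ y n}) hne) (by omega)

theorem continuous_of_lip {d : ℕ} {θ : ℝ} (h0 : 0 < θ) (h1 : θ < 1) {f : (ℕ → Fin d) → ℝ}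
    {C : ℝ} (hf : ∀ x y, |f x - f y| ≤ C * distTheta θ x y) : Continuous f := by
  rw [continuous_iff_continuousAt]
  intro x
  rw [ContinuousAt, Metric.tendsto_nhds]
  intro ε hε
  have hlim : Tendsto (fun n : ℕ => |C| * θ ^ n) atTop (nhds (|C| * 0)) :=
    (tendsto_pow_atTop_nhds_zero_of_lt_one h0.le h1).const_mul _
  rw [mul_zero] at hlim
  obtain ⟨n, hn⟩ := (hlim.eventually (gt_mem_nhds hε)).exists
  have hnear : ∀ᶠ y in nhds x, ∀ i ∈ Finset.range n, y i = x i := by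
    rw [Filter.eventually_all_finset]
    intro i _
    have hopen : IsOpen {y : ℕ → Fin d | y i = x i} :=
      (isOpen_discrete ({x i} : Set (Fin d))).preimage
        (continuous_apply (A := fun _ : ℕ => Fin d) i)
    exact hopen.mem_nhds rfl
  filter_upwards [hnear] with y hy
  rw [Real.dist_eq]
  calc |f y - f x| ≤ C * distTheta θ y x := hf y x
    _ ≤ |C| * distTheta θ y x :=
        mul_le_mul_of_nonneg_right (le_abs_self C) (distTheta_nonneg h0 _ _)
    _ ≤ |C| * θ ^ n := mul_le_mul_of_nonneg_left
        (distTheta_le_pow h0 h1.le fun i hi => hy i (Finset.mem_range.mpr hi)) (abs_nonneg C)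
    _ < ε := hn

/-! ### Bounded Lipschitz functions -/

/-- Bounded and Lipschitz for `d_θ`, with one constant serving for both the bound and the
Lipschitz estimate. -/
def BddLip {d : ℕ} (θ : ℝ) (f : (ℕ → Fin d) → ℝ) : Prop :=
  ∃ C : ℝ, 0 ≤ C ∧ (∀ x, |f x| ≤ C) ∧ ∀ x y, |f x - f y| ≤ C * distTheta θ x y

theorem BddLip.const {d : ℕ} {θ : ℝ} (h0 : 0 < θ) (c : ℝ) :
    BddLip θ (fun _ : ℕ → Fin d => c) :=
  ⟨|c|, abs_nonneg c, fun _ => le_rfl, fun x y => by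
    simpa using mul_nonneg (abs_nonneg c) (distTheta_nonneg h0 x y)⟩

theorem BddLip.add {d : ℕ} {θ : ℝ} {f g : (ℕ → Fin d) → ℝ} (hf : BddLip θ f)
    (hg : BddLip θ g) : BddLip θ (fun x => f x + g x) := by
  obtain ⟨C, hC, hfb, hfl⟩ := hf
  obtain ⟨D, hD, hgb, hgl⟩ := hg
  refine ⟨C + D, add_nonneg hC hD, fun x => ?_, fun x y => ?_⟩
  · exact (abs_add_le _ _).trans (add_le_add (hfb x) (hgb x))
  · have h : f x + g x - (f y + g y) = (f x - f y) + (g x - g y) := by ring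
    rw [h, add_mul]
    exact (abs_add_le _ _).trans (add_le_add (hfl x y) (hgl x y))

theorem BddLip.mul {d : ℕ} {θ : ℝ} {f g : (ℕ → Fin d) → ℝ} (hf : BddLip θ f)
    (hg : BddLip θ g) : BddLip θ (fun x => f x * g x) := by
  obtain ⟨C, hC, hfb, hfl⟩ := hf
  obtain ⟨D, hD, hgb, hgl⟩ := hg
  have hCD := mul_nonneg hC hD
  refine ⟨2 * (C * D), by positivity, fun x => ?_, fun x y => ?_⟩
  · rw [abs_mul]
    have := mul_le_mul (hfb x) (hgb x) (abs_nonneg _) hC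
    linarith
  · have h : f x * g x - f y * g y = f x * (g x - g y) + g y * (f x - f y) := by ring
    rw [h]
    refine (abs_add_le _ _).trans ?_
    rw [abs_mul, abs_mul]
    have e1 := mul_le_mul (hfb x) (hgl x y) (abs_nonneg _) hC
    have e2 := mul_le_mul (hgb y) (hfl x y) (abs_nonneg _) hD
    linarith

theorem BddLip.sum {d : ℕ} {θ : ℝ} (h0 : 0 < θ) {ι : Type*} (s : Finset ι)
    {f : ι → (ℕ → Fin d) → ℝ} (hf : ∀ i, BddLip θ (f i)) :
    BddLip θ (fun x => ∑ i ∈ s, f i x) := by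
  classical
  induction s using Finset.induction_on with
  | empty => simpa using BddLip.const h0 0
  | insert i s hi ih => simpa [Finset.sum_insert hi] using (hf i).add ih

theorem BddLip.comp_cons {d : ℕ} {θ : ℝ} (h0 : 0 < θ) (h1 : θ ≤ 1) {f : (ℕ → Fin d) → ℝ}
    (hf : BddLip θ f) (a : Fin d) : BddLip θ (fun x => f (cons a x)) := by
  obtain ⟨C, hC, hfb, hfl⟩ := hf
  exact ⟨C, hC, fun x => hfb _, fun x y => (hfl _ _).trans
    (mul_le_mul_of_nonneg_left (distTheta_cons_le h0 h1 a x y) hC)⟩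

/-- A bounded function of the first `n` coordinates is Lipschitz, since points differing in one of
these coordinates are at distance at least `θ ^ n`. -/
theorem BddLip.of_cylinder {d : ℕ} {θ : ℝ} (h0 : 0 < θ) (h1 : θ ≤ 1) {f : (ℕ → Fin d) → ℝ}
    {B : ℝ} (hB : ∀ x, |f x| ≤ B) (n : ℕ) (hf : ∀ x y, (∀ i < n, x i = y i) → f x = f y) :
    BddLip θ f := by
  have hpow : 0 < θ ^ n := pow_pos h0 n
  refine ⟨2 * |B| / θ ^ n, by positivity, fun x => ?_, fun x y => ?_⟩
  · rw [le_div_iff₀ hpow]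
    have hle : |f x| * θ ^ n ≤ |f x| :=
      mul_le_of_le_one_right (abs_nonneg _) (pow_le_one₀ h0.le h1)
    have := hB x
    have := le_abs_self B
    have := abs_nonneg B
    linarith
  · by_cases h : ∀ i < n, x i = y i
    · rw [hf x y h, sub_self, abs_zero]
      exact mul_nonneg (by positivity) (distTheta_nonneg h0 _ _)
    · push Not at h
      obtain ⟨i, hi, hne⟩ := h
      calc |f x - f y| ≤ |f x| + |f y| := abs_sub _ _
        _ ≤ 2 * |B| := by linarith [hB x, hB y, le_abs_self B]
        _ = 2 * |B| / θ ^ n * θ ^ n := by field_simp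
        _ ≤ 2 * |B| / θ ^ n * distTheta θ x y :=
          mul_le_mul_of_nonneg_left (pow_le_distTheta h0 h1 hi hne) (by positivity)

/-! ### The Ruelle operator of a normalized potential -/

theorem cons_zero_shift {d : ℕ} (x : ℕ → Fin d) : cons (x 0) (shift x) = x := by
  funext n
  cases n <;> rfl

theorem continuous_cons {d : ℕ} (a : Fin d) : Continuous (cons a : (ℕ → Fin d) → ℕ → Fin d) := by
  refine continuous_pi fun n => ?_
  cases n with
  | zero => exact continuous_const
  | succ n => exact continuous_apply n

theorem nonpos_of_normalized {d : ℕ} {A : (ℕ → Fin d) → ℝ}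
    (hA : ∀ x, ∑ a : Fin d, Real.exp (A (cons a x)) = 1) (x : ℕ → Fin d) : A x ≤ 0 := by
  rw [← Real.exp_le_one_iff, ← hA (shift x)]
  conv_lhs => rw [← cons_zero_shift x]
  exact Finset.single_le_sum (f := fun a => Real.exp (A (cons a (shift x))))
    (fun a _ => (Real.exp_pos _).le) (Finset.mem_univ (x 0))

theorem BddLip.exp {d : ℕ} {θ : ℝ} (h0 : 0 < θ) {A : (ℕ → Fin d) → ℝ} {C : ℝ}
    (hA : ∀ x, A x ≤ 0) (hLip : ∀ x y, |A x - A y| ≤ C * distTheta θ x y) :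
    BddLip θ (fun x => Real.exp (A x)) := by
  have key : ∀ s t : ℝ, s ≤ 0 → Real.exp s - Real.exp t ≤ |s - t| := by
    intro s t hs
    have e1 := Real.add_one_le_exp (t - s)
    have e2 : Real.exp t = Real.exp s * Real.exp (t - s) := by rw [← Real.exp_add]; ring_nf
    have e3 : Real.exp s ≤ 1 := Real.exp_le_one_iff.mpr hs
    have e4 := mul_le_mul_of_nonneg_left e1 (Real.exp_pos s).le
    have e5 := mul_le_mul_of_nonneg_left (le_abs_self (s - t)) (Real.exp_pos s).le
    have e6 := mul_le_mul_of_nonneg_right e3 (abs_nonneg (s - t))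
    nlinarith
  refine ⟨1 + |C|, by positivity, fun x => ?_, fun x y => ?_⟩
  · rw [abs_of_pos (Real.exp_pos _)]
    have := Real.exp_le_one_iff.mpr (hA x)
    linarith [abs_nonneg C]
  · have hd := distTheta_nonneg h0 x y
    have hxy : |Real.exp (A x) - Real.exp (A y)| ≤ |A x - A y| := by
      rw [abs_le']
      refine ⟨key _ _ (hA x), ?_⟩
      rw [neg_sub, abs_sub_comm]
      exact key _ _ (hA y)
    have := mul_le_mul_of_nonneg_right (le_abs_self C) hd
    linarith [hLip x y]

theorem continuous_ruelleSum {d : ℕ} {A g : (ℕ → Fin d) → ℝ} (hA : Continuous A)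
    (hg : Continuous g) : Continuous (ruelleSum A g) := by
  unfold ruelleSum
  exact continuous_finsetSum _ fun a _ =>
    (Real.continuous_exp.comp (hA.comp (continuous_cons a))).mul (hg.comp (continuous_cons a))

theorem ruelleSum_nonneg {d : ℕ} {A g : (ℕ → Fin d) → ℝ} (hg : ∀ x, 0 < g x) (x : ℕ → Fin d) :
    0 ≤ ruelleSum A g x :=
  Finset.sum_nonneg fun _ _ => mul_nonneg (Real.exp_pos _).le (hg _).le

theorem ruelleSum_le {d : ℕ} {A g : (ℕ → Fin d) → ℝ}
    (hA : ∀ x, ∑ a : Fin d, Real.exp (A (cons a x)) = 1) {M : ℝ} (hg : ∀ x, g x ≤ M)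
    (x : ℕ → Fin d) : ruelleSum A g x ≤ M := by
  calc ruelleSum A g x ≤ ∑ a : Fin d, Real.exp (A (cons a x)) * M :=
        Finset.sum_le_sum fun a _ => mul_le_mul_of_nonneg_left (hg _) (Real.exp_pos _).le
    _ = M := by rw [← Finset.sum_mul, hA, one_mul]

theorem neg_one_le_quot {d : ℕ} {A g : (ℕ → Fin d) → ℝ} (hg : ∀ x, 0 < g x)
    (x : ℕ → Fin d) : -1 ≤ (ruelleSum A g x - g x) / g x := by
  rw [le_div_iff₀ (hg x)]
  linarith [ruelleSum_nonneg (A := A) hg x]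

theorem continuous_quot {d : ℕ} {A g : (ℕ → Fin d) → ℝ} (hA : Continuous A)
    (hgc : Continuous g) (hg : ∀ x, 0 < g x) :
    Continuous fun x => (ruelleSum A g x - g x) / g x :=
  ((continuous_ruelleSum hA hgc).sub hgc).div hgc fun x => (hg x).ne'

theorem integrable_of_continuous {d : ℕ} (ν : Measure (ℕ → Fin d)) [IsFiniteMeasure ν]
    {f : (ℕ → Fin d) → ℝ} (hf : Continuous f) : Integrable f ν :=
  hf.integrable_of_hasCompactSupport (HasCompactSupport.of_compactSpace f)

/-! ### Approximation by functions of finitely many coordinates -/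

/-- Keep the first `n` coordinates and replace all others by the symbol `a₀`. -/
def trunc {d : ℕ} (a₀ : Fin d) (n : ℕ) (x : ℕ → Fin d) : ℕ → Fin d :=
  fun k => if k < n then x k else a₀

theorem continuous_trunc {d : ℕ} (a₀ : Fin d) (n : ℕ) : Continuous (trunc a₀ n) := by
  refine continuous_pi fun k => ?_
  by_cases h : k < n
  · simpa [trunc, h] using continuous_apply k
  · simpa [trunc, h] using continuous_const

theorem tendsto_trunc {d : ℕ} (a₀ : Fin d) (x : ℕ → Fin d) :
    Tendsto (fun n => trunc a₀ n x) atTop (nhds x) := by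
  rw [tendsto_pi_nhds]
  intro k
  refine tendsto_const_nhds.congr' ?_
  filter_upwards [eventually_gt_atTop k] with n hn
  simp [trunc, hn]

/-- The approximation `u ∘ trunc a₀ n` of `u` by a function of the first `n` coordinates. -/
def truncComp {d : ℕ} (a₀ : Fin d) (n : ℕ) (u : C((ℕ → Fin d), ℝ)) : C((ℕ → Fin d), ℝ) :=
  u.comp ⟨trunc a₀ n, continuous_trunc a₀ n⟩

theorem tendsto_truncComp {d : ℕ} (a₀ : Fin d) (u : C((ℕ → Fin d), ℝ)) (x : ℕ → Fin d) :
    Tendsto (fun n => truncComp a₀ n u x) atTop (nhds (u x)) :=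
  (u.continuous.tendsto x).comp (tendsto_trunc a₀ x)

theorem exists_pos_bounds {d : ℕ} (a₀ : Fin d) (u : C((ℕ → Fin d), ℝ)) (hu : ∀ x, 0 < u x) :
    ∃ m M : ℝ, 0 < m ∧ ∀ x, m ≤ u x ∧ u x ≤ M := by
  have : Nonempty (ℕ → Fin d) := ⟨fun _ => a₀⟩
  obtain ⟨p, -, hp⟩ := isCompact_univ.exists_isMinOn Set.univ_nonempty u.continuous.continuousOn
  obtain ⟨q, -, hq⟩ := isCompact_univ.exists_isMaxOn Set.univ_nonempty u.continuous.continuousOn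
  exact ⟨u p, u q, hu p, fun x => ⟨hp (Set.mem_univ x), hq (Set.mem_univ x)⟩⟩

/-- Dominated convergence along the finite-coordinate approximations: `u ∘ trunc a₀ n` has the same
bounds `m ≤ · ≤ M` as `u`, so all the integrands lie in `[-1, M / m]`. -/
theorem tendsto_integral_trunc {d : ℕ} {A : (ℕ → Fin d) → ℝ} (hAc : Continuous A)
    (hA : ∀ x, ∑ a : Fin d, Real.exp (A (cons a x)) = 1) (ν : Measure (ℕ → Fin d))
    [IsFiniteMeasure ν] (a₀ : Fin d) (u : C((ℕ → Fin d), ℝ)) (hu : ∀ x, 0 < u x) :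
    Tendsto (fun n => ∫ x, (ruelleSum A (truncComp a₀ n u) x - truncComp a₀ n u x) /
      truncComp a₀ n u x ∂ν) atTop (nhds (∫ x, (ruelleSum A u x - u x) / u x ∂ν)) := by
  obtain ⟨m, M, hm, hmM⟩ := exists_pos_bounds a₀ u hu
  have hM : 0 < M := hm.trans_le ((hmM fun _ => a₀).1.trans (hmM fun _ => a₀).2)
  refine tendsto_integral_of_dominated_convergence (fun _ => 1 + M / m) (fun n => ?_)
    (integrable_const _) (fun n => ?_) ?_
  · exact (integrable_of_continuous ν
      (continuous_quot hAc (truncComp a₀ n u).continuous fun x => hu _)).aestronglyMeasurable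
  · refine Eventually.of_forall fun x => ?_
    have hpos : ∀ y, 0 < truncComp a₀ n u y := fun y => hu _
    have hlow := neg_one_le_quot (A := A) hpos x
    have hR : ruelleSum A (truncComp a₀ n u) x ≤ M := ruelleSum_le hA (fun y => (hmM _).2) x
    have hmx : m ≤ truncComp a₀ n u x := (hmM _).1
    have hMm : 0 < M / m := div_pos hM hm
    rw [Real.norm_eq_abs, abs_le]
    refine ⟨by linarith, ?_⟩
    calc (ruelleSum A (truncComp a₀ n u) x - truncComp a₀ n u x) / truncComp a₀ n u x
        ≤ M / truncComp a₀ n u x :=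
          div_le_div_of_nonneg_right (by linarith [hpos x]) (hpos x).le
      _ ≤ M / m := div_le_div_of_nonneg_left hM.le hm hmx
      _ ≤ 1 + M / m := by linarith
  · refine Eventually.of_forall fun x => ?_
    have hR : Tendsto (fun n => ruelleSum A (truncComp a₀ n u) x) atTop
        (nhds (ruelleSum A u x)) :=
      tendsto_finsetSum _ fun a _ => (tendsto_truncComp a₀ u (cons a x)).const_mul _
    exact (hR.sub (tendsto_truncComp a₀ u x)).div (tendsto_truncComp a₀ u x) (hu x).ne'

theorem bddLip_truncComp {d : ℕ} {θ : ℝ} (h0 : 0 < θ) (h1 : θ ≤ 1) (a₀ : Fin d) (n : ℕ)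
    (u : C((ℕ → Fin d), ℝ)) : BddLip θ (truncComp a₀ n u) := by
  refine BddLip.of_cylinder h0 h1 (B := ‖truncComp a₀ n u‖)
    (fun x => (truncComp a₀ n u).norm_coe_le_norm x) n fun x y hxy => ?_
  refine congrArg u (funext fun k => ?_)
  by_cases hk : k < n
  · simp [trunc, hk, hxy k hk]
  · simp [trunc, hk]

/-- Inverses of cylinder functions are again cylinder functions; this gives the Lipschitz
property of `1 / (u ∘ trunc a₀ n)` without a general statement about reciprocals. -/
theorem bddLip_truncComp_inv {d : ℕ} {θ : ℝ} (h0 : 0 < θ) (h1 : θ ≤ 1) (a₀ : Fin d) (n : ℕ)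
    (u : C((ℕ → Fin d), ℝ)) (hu : ∀ x, 0 < u x) :
    BddLip θ (fun x => (truncComp a₀ n u x)⁻¹) := by
  let w : C((ℕ → Fin d), ℝ) := ⟨fun x => (u x)⁻¹, u.continuous.inv₀ fun x => (hu x).ne'⟩
  exact bddLip_truncComp h0 h1 a₀ n w

theorem bddLip_ruelleSum {d : ℕ} {θ : ℝ} (h0 : 0 < θ) (h1 : θ ≤ 1) {A g : (ℕ → Fin d) → ℝ}
    (hA : BddLip θ fun x => Real.exp (A x)) (hg : BddLip θ g) : BddLip θ (ruelleSum A g) :=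
  BddLip.sum h0 Finset.univ fun a => (hA.comp_cons h0 h1 a).mul (hg.comp_cons h0 h1 a)

/-! ### The Legendre-transform formula -/

/-- **Legendre-transform formula for the rate function.** -/
theorem stmt_12 (d : ℕ) (hd : 2 ≤ d) (θ : ℝ) (hθ0 : 0 < θ) (hθ1 : θ ≤ 1 / 2)
    (A : (ℕ → Fin d) → ℝ)
    (CA : ℝ) (hALip : ∀ x y, |A x - A y| ≤ CA * distTheta θ x y)
    (hAnorm : ∀ x, ∑ a : Fin d, Real.exp (A (cons a x)) = 1)
    (ν : Measure (ℕ → Fin d)) (hν : IsProbabilityMeasure ν) :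
    Ifun A ν = sSup {r : ℝ | ∃ (V : (ℕ → Fin d) → ℝ) (CV : ℝ) (lam : ℝ)
        (F : C((ℕ → Fin d), ℝ)) (CF : ℝ),
      (∀ x y, |V x - V y| ≤ CV * distTheta θ x y) ∧
      (∀ x y, |F x - F y| ≤ CF * distTheta θ x y) ∧
      (∀ x, 0 < F x) ∧
      (∀ x, ruelleSum A F x = (1 - V x + lam) * F x) ∧
      r = (∫ x, V x ∂ν) - lam} := by
  have hθle : θ ≤ 1 := by linarith
  have hθlt : θ < 1 := by linarith
  have hAc : Continuous A := continuous_of_lip hθ0 hθlt hALip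
  have hexp : BddLip θ fun x => Real.exp (A x) :=
    BddLip.exp hθ0 (nonpos_of_normalized hAnorm) hALip
  let a₀ : Fin d := ⟨0, by omega⟩
  unfold Ifun
  set S := {r : ℝ | ∃ u : C((ℕ → Fin d), ℝ), (∀ x, 0 < u x) ∧
      r = ∫ x, (ruelleSum A u x - u x) / u x ∂ν} with hS
  set T := {r : ℝ | ∃ (V : (ℕ → Fin d) → ℝ) (CV : ℝ) (lam : ℝ)
        (F : C((ℕ → Fin d), ℝ)) (CF : ℝ),
      (∀ x y, |V x - V y| ≤ CV * distTheta θ x y) ∧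
      (∀ x y, |F x - F y| ≤ CF * distTheta θ x y) ∧
      (∀ x, 0 < F x) ∧
      (∀ x, ruelleSum A F x = (1 - V x + lam) * F x) ∧
      r = (∫ x, V x ∂ν) - lam} with hT
  have hSbdd : BddBelow S := by
    refine ⟨-1, ?_⟩
    rintro r ⟨u, hu, rfl⟩
    calc (-1 : ℝ) = ∫ _x, (-1 : ℝ) ∂ν := by simp
      _ ≤ _ := integral_mono (integrable_const _)
        (integrable_of_continuous ν (continuous_quot hAc u.continuous hu))
        fun x => neg_one_le_quot hu x
  have hTS : ∀ r ∈ T, -r ∈ S := by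
    rintro r ⟨V, CV, lam, F, CF, hV, -, hF, hEq, rfl⟩
    refine ⟨F, hF, ?_⟩
    have hVint : Integrable V ν := integrable_of_continuous ν (continuous_of_lip hθ0 hθlt hV)
    have hquot : ∀ x, (ruelleSum A F x - F x) / F x = lam - V x := by
      intro x
      rw [hEq x, div_eq_iff (hF x).ne']
      ring
    simp only [hquot]
    rw [integral_sub (integrable_const _) hVint]
    simp
  have hcyl : ∀ (u : C((ℕ → Fin d), ℝ)), (∀ x, 0 < u x) → ∀ n,
      -(∫ x, (ruelleSum A (truncComp a₀ n u) x - truncComp a₀ n u x) /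
        truncComp a₀ n u x ∂ν) ∈ T := by
    intro u hu n
    have hpos : ∀ x, 0 < truncComp a₀ n u x := fun x => hu _
    have hFlip := bddLip_truncComp hθ0 hθle a₀ n u
    have hVlip : BddLip θ fun x => 1 + (-1) *
        (ruelleSum A (truncComp a₀ n u) x * (truncComp a₀ n u x)⁻¹) :=
      (BddLip.const hθ0 1).add ((BddLip.const hθ0 (-1)).mul
        ((bddLip_ruelleSum hθ0 hθle hexp hFlip).mul
          (bddLip_truncComp_inv hθ0 hθle a₀ n u hu)))
    obtain ⟨CF, -, -, hCF⟩ := hFlip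
    obtain ⟨CV, -, -, hCV⟩ := hVlip
    refine ⟨_, CV, 0, truncComp a₀ n u, CF, hCV, hCF, hpos, fun x => ?_, ?_⟩
    · have := (hpos x).ne'
      field_simp
      ring
    · rw [sub_zero, ← integral_neg]
      refine integral_congr_ae (Eventually.of_forall fun x => ?_)
      have := (hpos x).ne'
      simp only
      field_simp
      ring
  have hTne : T.Nonempty :=
    ⟨_, hcyl (ContinuousMap.const _ 1) (fun _ => one_pos) 0⟩
  have hSne : S.Nonempty := ⟨_, hTS _ hTne.some_mem⟩
  have hle : ∀ r ∈ T, r ≤ -sInf S := fun r hr => by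
    linarith [csInf_le hSbdd (hTS r hr)]
  refine le_antisymm ?_ (csSup_le hTne hle)
  rw [neg_le]
  refine le_csInf hSne ?_
  rintro s ⟨u, hu, rfl⟩
  refine ge_of_tendsto (tendsto_integral_trunc hAc hAnorm ν a₀ u hu)
    (Eventually.of_forall fun n => ?_)
  rw [neg_le]
  exact le_csSup ⟨_, hle⟩ (hcyl u hu n)
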